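/- Let M : ℝ^d → ℝ be positive, twice continuously differentiable, satisfying C₁⟨v⟩^{−γ} ≤ M(v) ≤ C₂⟨v⟩^{−γ} and |∇M(v)| ≤ C₃⟨v⟩^{−γ} for all v, with γ > d/2, and suppose the potential W := ΔM/M satisfies |W(v)| ≤ C₄⟨v⟩² for all v (i.e. ⟨v⟩^{−2}W is bounded). Then ∫_{ℝ^d} ⟨v⟩² |∇( M(v) ⟨v⟩^{−2} )|² dv = − ∫_{ℝ^d} W(v) M(v)² ⟨v⟩^{−2} dv + d ∫_{ℝ^d} M(v)² ⟨v⟩^{−4} dv; in particular this quantity is finite, so Assumption (A2) holds. -/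

import Mathlib

/-!
For a positive `C²` weight `g`, the product rule gives the pointwise identity
`½ Δ(M²/g) = g |∇(M/g)|² + (M ΔM)/g − ½ (M/g)² Δg`, and `Δg = 2d` when `g = ⟨v⟩²`.
The last two terms are integrable, so the Laplacian of the integrable function `φ = M²/g` is bounded
below by an integrable function. Testing against cutoffs `χ` dilated by a factor `n` costs only
`∫ χ Δφ = ∫ φ Δχ = O(n⁻²)`. By monotonicity `Δφ` is therefore integrable with integral zero, which
yields both the finiteness of the energy and the identity.
-/

open MeasureTheory Real

noncomputable section

/-- The Laplacian on `ℝ^d`, as the sum of the second partial derivatives. -/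
def lap {d : ℕ} (f : EuclideanSpace ℝ (Fin d) → ℝ) (v : EuclideanSpace ℝ (Fin d)) : ℝ :=
  ∑ i : Fin d, fderiv ℝ (fun w => fderiv ℝ f w (EuclideanSpace.single i (1 : ℝ))) v
    (EuclideanSpace.single i (1 : ℝ))

section

open Filter Topology InnerProductSpace Laplacian Gradient Metric Module

section NormedSpace

variable {E : Type*} [NormedAddCommGroup E] [NormedSpace ℝ E] {f g : E → ℝ}

lemma contDiff_fderiv_apply (hf : ContDiff ℝ 2 f) (v : E) :
    ContDiff ℝ 1 fun y ↦ fderiv ℝ f y v :=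
  (hf.fderiv_right (m := 1) (by norm_num)).clm_apply contDiff_const

lemma continuous_fderiv_apply (hf : ContDiff ℝ 1 f) (v : E) :
    Continuous fun x ↦ fderiv ℝ f x v :=
  (hf.continuous_fderiv one_ne_zero).clm_apply continuous_const

lemma integral_mul_fderiv_of_hasCompactSupport [FiniteDimensional ℝ E] [MeasurableSpace E]
    [BorelSpace E] {μ : Measure E} [μ.IsAddHaarMeasure] (hf : ContDiff ℝ 1 f)
    (hfs : HasCompactSupport f) (hg : ContDiff ℝ 1 g) (v : E) :
    ∫ x, f x * fderiv ℝ g x v ∂μ = -∫ x, fderiv ℝ f x v * g x ∂μ :=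
  integral_mul_fderiv_eq_neg_fderiv_mul_of_integrable
    (((continuous_fderiv_apply hf v).mul hg.continuous).integrable_of_hasCompactSupport
      (hfs.fderiv_apply (𝕜 := ℝ) v).mul_right)
    ((hf.continuous.mul (continuous_fderiv_apply hg v)).integrable_of_hasCompactSupport
      hfs.mul_right)
    ((hf.continuous.mul hg.continuous).integrable_of_hasCompactSupport hfs.mul_right)
    (fun x _ ↦ hf.differentiable one_ne_zero x) (fun x _ ↦ hg.differentiable one_ne_zero x)

end NormedSpace

section InnerProductSpace

variable {E : Type*} [NormedAddCommGroup E] [InnerProductSpace ℝ E] {f g M : E → ℝ} {x : E}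

lemma norm_gradient [CompleteSpace E] : ‖∇ f x‖ = ‖fderiv ℝ f x‖ := by
  rw [← toDual_gradient, LinearIsometryEquiv.norm_map]

lemma gradient_mul [CompleteSpace E] (hf : DifferentiableAt ℝ f x)
    (hg : DifferentiableAt ℝ g x) : ∇ (f * g) x = f x • ∇ g x + g x • ∇ f x := by
  simp only [gradient, fderiv_mul hf hg, map_add, map_smulₛₗ, conj_trivial]

lemma contDiff_one_add_norm_sq {n : WithTop ℕ∞} : ContDiff ℝ n fun y : E ↦ 1 + ‖y‖ ^ 2 :=
  contDiff_const.add (contDiff_norm_sq ℝ)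

variable [FiniteDimensional ℝ E]

lemma laplacian_eq_sum_fderiv {ι : Type*} [Fintype ι] (b : OrthonormalBasis ι ℝ E)
    (hf : ContDiffAt ℝ 2 f x) :
    Δ f x = ∑ i, fderiv ℝ (fun y ↦ fderiv ℝ f y (b i)) x (b i) := by
  have hf' : DifferentiableAt ℝ (fderiv ℝ f) x :=
    (hf.fderiv_right (m := 1) (by norm_num)).differentiableAt one_ne_zero
  rw [laplacian_eq_iteratedFDeriv_orthonormalBasis f b]
  refine Finset.sum_congr rfl fun i _ ↦ ?_
  rw [iteratedFDeriv_two_apply, fderiv_clm_apply hf' (differentiableAt_const _)]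
  simp

lemma continuous_laplacian (hf : ContDiff ℝ 2 f) : Continuous (Δ f) := by
  rw [laplacian_eq_iteratedFDeriv_stdOrthonormalBasis]
  exact continuous_finsetSum _ fun i _ ↦
    (hf.continuous_iteratedFDeriv le_rfl).eval_const _

lemma hasCompactSupport_laplacian (hf : HasCompactSupport f) : HasCompactSupport (Δ f) := by
  refine (hf.iteratedFDeriv (𝕜 := ℝ) 2).mono fun x hx h0 ↦ hx ?_
  simp only [laplacian_eq_iteratedFDeriv_stdOrthonormalBasis, h0, zero_apply,
    Finset.sum_const_zero]

lemma laplacian_mul (hf : ContDiffAt ℝ 2 f x) (hg : ContDiffAt ℝ 2 g x) :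
    Δ (f * g) x = f x * Δ g x + 2 * ⟪∇ f x, ∇ g x⟫_ℝ + g x * Δ f x := by
  have hdiff : ∀ {h : E → ℝ}, ContDiffAt ℝ 2 h x → ∀ v,
      DifferentiableAt ℝ (fun y ↦ fderiv ℝ h y v) x := fun hh v ↦
    ((hh.fderiv_right (m := 1) (by norm_num)).clm_apply contDiffAt_const).differentiableAt
      one_ne_zero
  have hf₀ := hf.differentiableAt two_ne_zero
  have hg₀ := hg.differentiableAt two_ne_zero
  have leibniz : ∀ v, fderiv ℝ (fun y ↦ fderiv ℝ (f * g) y v) x v =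
      f x * fderiv ℝ (fun y ↦ fderiv ℝ g y v) x v + 2 * (⟪∇ f x, v⟫_ℝ * ⟪v, ∇ g x⟫_ℝ)
        + g x * fderiv ℝ (fun y ↦ fderiv ℝ f y v) x v := by
    intro v
    have first_order : (fun y ↦ fderiv ℝ (f * g) y v) =ᶠ[𝓝 x]
        fun y ↦ f y * fderiv ℝ g y v + g y * fderiv ℝ f y v := by
      filter_upwards [hf.eventually (by simp), hg.eventually (by simp)] with y hfy hgy
      rw [fderiv_mul (hfy.differentiableAt two_ne_zero) (hgy.differentiableAt two_ne_zero)]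
      rfl
    rw [first_order.fderiv_eq, fderiv_fun_add (hf₀.fun_mul (hdiff hg v)) (hg₀.fun_mul (hdiff hf v)),
      fderiv_fun_mul hf₀ (hdiff hg v), fderiv_fun_mul hg₀ (hdiff hf v), inner_gradient_left,
      inner_gradient_right]
    simp only [add_apply, smul_apply, smul_eq_mul, conj_trivial]
    ring
  let b := stdOrthonormalBasis ℝ E
  have hfg : ContDiffAt ℝ 2 (f * g) x := hf.mul hg
  simp only [laplacian_eq_sum_fderiv b hfg, laplacian_eq_sum_fderiv b hf,
    laplacian_eq_sum_fderiv b hg, leibniz, Finset.sum_add_distrib, ← Finset.mul_sum,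
    b.sum_inner_mul_inner]

lemma laplacian_comp_smul (c : ℝ) (hf : ContDiff ℝ 2 f) :
    (Δ fun y ↦ f (c • y)) x = c ^ 2 * Δ f (c • x) := by
  simp only [laplacian_eq_iteratedFDeriv_stdOrthonormalBasis,
    iteratedFDeriv_comp_const_smul c hf, Finset.mul_sum, smul_apply, smul_eq_mul]

lemma laplacian_one_add_norm_sq : (Δ fun y : E ↦ (1 + ‖y‖ ^ 2 : ℝ)) x = 2 * (finrank ℝ E : ℝ) := by
  have hderiv : ∀ v : E, (fun y : E ↦ fderiv ℝ (fun z : E ↦ (1 + ‖z‖ ^ 2 : ℝ)) y v) =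
      ((2 : ℝ) • innerSL ℝ v : E →L[ℝ] ℝ) := by
    intro v
    ext y
    simp [fderiv_const_add, real_inner_comm]
  let b := stdOrthonormalBasis ℝ E
  rw [laplacian_eq_sum_fderiv b contDiff_one_add_norm_sq.contDiffAt]
  calc ∑ i, fderiv ℝ (fun y : E ↦ fderiv ℝ (fun z : E ↦ (1 + ‖z‖ ^ 2 : ℝ)) y (b i)) x (b i)
      = ∑ _ : Fin (finrank ℝ E), (2 : ℝ) := by
        refine Finset.sum_congr rfl fun i _ ↦ ?_
        rw [hderiv, ContinuousLinearMap.fderiv, smul_apply, innerSL_apply_apply,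
          real_inner_self_eq_norm_sq, b.norm_eq_one]
        norm_num
    _ = 2 * finrank ℝ E := by simp [mul_comm]

theorem laplacian_sq_div (hM : ContDiffAt ℝ 2 M x) (hg : ContDiffAt ℝ 2 g x) (hgx : g x ≠ 0) :
    Δ (fun y ↦ M y ^ 2 / g y) x =
      2 * (g x * ‖fderiv ℝ (fun y ↦ M y / g y) x‖ ^ 2) + 2 * (M x * Δ M x / g x)
        - (M x / g x) ^ 2 * Δ g x := by
  set u : E → ℝ := fun y ↦ M y / g y with hu_def
  have hu : ContDiffAt ℝ 2 u x := hM.div hg hgx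
  have hMgu : M =ᶠ[𝓝 x] g * u := by
    filter_upwards [hg.continuousAt.eventually_ne hgx] with y hy
    simp [hu_def, mul_div_cancel₀ _ hy]
  have hφ : (fun y ↦ M y ^ 2 / g y) = M * u := by
    ext y
    simp only [hu_def, Pi.mul_apply]
    ring
  have hΔM : Δ M x = g x * Δ u x + 2 * ⟪∇ g x, ∇ u x⟫_ℝ + u x * Δ g x := by
    rw [(laplacian_congr_nhds hMgu).eq_of_nhds, laplacian_mul hg hu]
  have hgradM : ⟪∇ M x, ∇ u x⟫_ℝ = g x * ‖∇ u x‖ ^ 2 + u x * ⟪∇ g x, ∇ u x⟫_ℝ := by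
    rw [hMgu.gradient_eq, gradient_mul (hg.differentiableAt two_ne_zero)
      (hu.differentiableAt two_ne_zero), inner_add_left, real_inner_smul_left,
      real_inner_smul_left, real_inner_self_eq_norm_sq]
  have hMx : M x = g x * u x := hMgu.eq_of_nhds
  rw [hφ, laplacian_mul hM hu, hgradM, norm_gradient, mul_div_right_comm,
    show M x / g x = u x from rfl, hMx]
  linear_combination (-u x) * hΔM

/-- The `n`-th term of a sequence of smooth cutoffs exhausting `E`, used to integrate by parts over
the whole space: a bump function equal to `1` on the unit ball, dilated by the factor `n + 1`. -/
def cutoff (n : ℕ) (x : E) : ℝ :=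
  (⟨1, 2, one_pos, one_lt_two⟩ : ContDiffBump (0 : E)) ((n + 1 : ℝ)⁻¹ • x)

lemma contDiff_cutoff (n : ℕ) : ContDiff ℝ 2 (cutoff n : E → ℝ) :=
  (ContDiffBump.contDiff _).comp (contDiff_const_smul _)

lemma hasCompactSupport_cutoff (n : ℕ) : HasCompactSupport (cutoff n : E → ℝ) :=
  (ContDiffBump.hasCompactSupport _).comp_smul (by positivity)

lemma cutoff_nonneg (n : ℕ) (x : E) : 0 ≤ cutoff n x :=
  ContDiffBump.nonneg _

lemma cutoff_le_one (n : ℕ) (x : E) : cutoff n x ≤ 1 :=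
  ContDiffBump.le_one _

lemma cutoff_eq_one {n : ℕ} (hx : x ∈ closedBall 0 (n : ℝ)) : cutoff n x = 1 := by
  refine ContDiffBump.one_of_mem_closedBall _ ?_
  rw [mem_closedBall_zero_iff] at hx ⊢
  rw [norm_smul, norm_of_nonneg (by positivity), inv_mul_le_one₀ (by positivity)]
  linarith

lemma tendsto_cutoff (x : E) : Tendsto (fun n ↦ cutoff n x) atTop (𝓝 1) := by
  refine tendsto_const_nhds.congr' ?_
  filter_upwards [eventually_ge_atTop ⌈‖x‖⌉₊] with n hn
  exact (cutoff_eq_one (mem_closedBall_zero_iff.mpr (Nat.ceil_le.mp hn))).symm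

variable (E) in
lemma exists_abs_laplacian_cutoff_le :
    ∃ K, ∀ (n : ℕ) (x : E), |Δ (cutoff n : E → ℝ) x| ≤ K * ((n + 1 : ℝ)⁻¹) ^ 2 := by
  let χ : ContDiffBump (0 : E) := ⟨1, 2, one_pos, one_lt_two⟩
  obtain ⟨K, hK⟩ := (hasCompactSupport_laplacian χ.hasCompactSupport).exists_bound_of_continuous
    (continuous_laplacian χ.contDiff)
  refine ⟨K, fun n x ↦ ?_⟩
  have hscale : Δ (cutoff n : E → ℝ) x = ((n + 1 : ℝ)⁻¹) ^ 2 * Δ (χ : E → ℝ) ((n + 1 : ℝ)⁻¹ • x) :=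
    laplacian_comp_smul _ χ.contDiff
  rw [hscale, abs_mul, abs_of_nonneg (by positivity), mul_comm]
  exact mul_le_mul_of_nonneg_right (hK _) (by positivity)

variable [MeasurableSpace E] [BorelSpace E] {μ : Measure E}

lemma tendsto_integral_cutoff_mul (hf : Integrable f μ) :
    Tendsto (fun n ↦ ∫ x, cutoff n x * f x ∂μ) atTop (𝓝 (∫ x, f x ∂μ)) := by
  refine tendsto_integral_of_dominated_convergence _ (fun n ↦ ?_) hf.norm (fun n ↦ ?_) ?_
  · exact (contDiff_cutoff n).continuous.aestronglyMeasurable.mul hf.aestronglyMeasurable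
  · refine .of_forall fun x ↦ ?_
    rw [norm_mul, norm_of_nonneg (cutoff_nonneg n x)]
    exact mul_le_of_le_one_left (norm_nonneg _) (cutoff_le_one n x)
  · refine .of_forall fun x ↦ ?_
    simpa only [one_mul] using (tendsto_cutoff x).mul_const (f x)

lemma integrable_cutoff_mul (n : ℕ) (hf : LocallyIntegrable f μ) :
    Integrable (fun x ↦ cutoff n x * f x) μ :=
  hf.integrable_smul_left_of_hasCompactSupport (contDiff_cutoff n).continuous
    (hasCompactSupport_cutoff n)

lemma integrable_of_tendsto_integral_cutoff_mul {I : ℝ} (hf : LocallyIntegrable f μ)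
    (hf₀ : ∀ x, 0 ≤ f x)
    (hI : Tendsto (fun n ↦ ∫ x, cutoff n x * f x ∂μ) atTop (𝓝 I)) : Integrable f μ := by
  obtain ⟨B, hB⟩ := hI.isBoundedUnder_le
  refine (aecover_closedBall (x := 0) tendsto_natCast_atTop_atTop)
    |>.integrable_of_integral_bounded_of_nonneg_ae B
      (fun n ↦ hf.integrableOn_isCompact (isCompact_closedBall _ _)) (.of_forall hf₀) ?_
  filter_upwards [eventually_map.mp hB] with n hn
  calc ∫ x in closedBall 0 (n : ℝ), f x ∂μ
      = ∫ x in closedBall 0 (n : ℝ), cutoff n x * f x ∂μ :=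
        setIntegral_congr_fun measurableSet_closedBall fun x hx ↦ by
          simp only [cutoff_eq_one hx, one_mul]
    _ ≤ ∫ x, cutoff n x * f x ∂μ :=
        setIntegral_le_integral (integrable_cutoff_mul n hf)
          (.of_forall fun x ↦ mul_nonneg (cutoff_nonneg n x) (hf₀ x))
    _ ≤ B := hn

lemma memLp_of_abs_le_one_add_norm_sq_rpow [μ.IsAddHaarMeasure] {γ C : ℝ} (hγ : finrank ℝ E / 2 < γ)
    (hf : AEStronglyMeasurable f μ) (hfC : ∀ x, |f x| ≤ C * √(1 + ‖x‖ ^ 2) ^ (-γ)) :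
    MemLp f 2 μ := by
  rw [memLp_two_iff_integrable_sq hf]
  have hdecay : Integrable (fun x : E ↦ C ^ 2 * (1 + ‖x‖ ^ 2) ^ (-(2 * γ) / 2)) μ :=
    (integrable_rpow_neg_one_add_norm_sq (by linarith)).const_mul _
  refine hdecay.mono' (hf.pow 2) (.of_forall fun x ↦ ?_)
  have hsqrt : (√(1 + ‖x‖ ^ 2) ^ (-γ)) ^ 2 = (1 + ‖x‖ ^ 2) ^ (-(2 * γ) / 2) := by
    rw [sqrt_eq_rpow, ← rpow_mul (by positivity), ← rpow_mul_natCast (by positivity)]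
    congr 1
    push_cast
    ring
  calc ‖f x ^ 2‖ = |f x| ^ 2 := by rw [norm_pow, norm_eq_abs]
    _ ≤ (C * √(1 + ‖x‖ ^ 2) ^ (-γ)) ^ 2 := pow_le_pow_left₀ (abs_nonneg _) (hfC x) 2
    _ = C ^ 2 * (1 + ‖x‖ ^ 2) ^ (-(2 * γ) / 2) := by rw [mul_pow, hsqrt]

variable [μ.IsAddHaarMeasure]

lemma integral_mul_laplacian_of_hasCompactSupport (hf : ContDiff ℝ 2 f)
    (hfs : HasCompactSupport f) (hg : ContDiff ℝ 2 g) :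
    ∫ x, f x * Δ g x ∂μ = ∫ x, Δ f x * g x ∂μ := by
  let b := stdOrthonormalBasis ℝ E
  have hfs' : ∀ i, HasCompactSupport fun y ↦ fderiv ℝ f y (b i) :=
    fun i ↦ hfs.fderiv_apply (𝕜 := ℝ) (b i)
  have hfg : ∀ i, Integrable
      (fun x ↦ f x * fderiv ℝ (fun y ↦ fderiv ℝ g y (b i)) x (b i)) μ := fun i ↦
    (hf.continuous.mul (continuous_fderiv_apply (contDiff_fderiv_apply hg (b i)) (b i)))
      |>.integrable_of_hasCompactSupport hfs.mul_right
  have hgf : ∀ i, Integrable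
      (fun x ↦ fderiv ℝ (fun y ↦ fderiv ℝ f y (b i)) x (b i) * g x) μ := fun i ↦
    ((continuous_fderiv_apply (contDiff_fderiv_apply hf (b i)) (b i)).mul hg.continuous)
      |>.integrable_of_hasCompactSupport ((hfs' i).fderiv_apply (𝕜 := ℝ) (b i)).mul_right
  simp only [laplacian_eq_sum_fderiv b hf.contDiffAt, laplacian_eq_sum_fderiv b hg.contDiffAt,
    Finset.mul_sum, Finset.sum_mul]
  rw [integral_finsetSum _ fun i _ ↦ hfg i, integral_finsetSum _ fun i _ ↦ hgf i]
  refine Finset.sum_congr rfl fun i _ ↦ ?_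
  calc ∫ x, f x * fderiv ℝ (fun y ↦ fderiv ℝ g y (b i)) x (b i) ∂μ
      = -∫ x, fderiv ℝ f x (b i) * fderiv ℝ g x (b i) ∂μ :=
        integral_mul_fderiv_of_hasCompactSupport (hf.of_le one_le_two) hfs
          (contDiff_fderiv_apply hg (b i)) (b i)
    _ = ∫ x, fderiv ℝ (fun y ↦ fderiv ℝ f y (b i)) x (b i) * g x ∂μ := by
        rw [integral_mul_fderiv_of_hasCompactSupport (contDiff_fderiv_apply hf (b i)) (hfs' i)
          (hg.of_le one_le_two), neg_neg]

lemma tendsto_integral_cutoff_mul_laplacian (hf : ContDiff ℝ 2 f) (hfi : Integrable f μ) :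
    Tendsto (fun n ↦ ∫ x, cutoff n x * Δ f x ∂μ) atTop (𝓝 0) := by
  obtain ⟨K, hK⟩ := exists_abs_laplacian_cutoff_le E
  have hbound : ∀ n : ℕ, ‖∫ x, cutoff n x * Δ f x ∂μ‖ ≤
      K * ((n + 1 : ℝ)⁻¹) ^ 2 * ∫ x, ‖f x‖ ∂μ := by
    intro n
    rw [integral_mul_laplacian_of_hasCompactSupport (contDiff_cutoff n)
      (hasCompactSupport_cutoff n) hf, ← integral_const_mul]
    refine norm_integral_le_of_norm_le (hfi.norm.const_mul _) (.of_forall fun x ↦ ?_)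
    rw [norm_mul]
    exact mul_le_mul_of_nonneg_right (hK n x) (norm_nonneg _)
  refine squeeze_zero_norm hbound ?_
  have hscale : Tendsto (fun n : ℕ ↦ (n + 1 : ℝ)⁻¹) atTop (𝓝 0) := by
    simpa only [one_div] using tendsto_one_div_add_atTop_nhds_zero_nat (𝕜 := ℝ)
  simpa using ((hscale.pow 2).const_mul K).mul_const (∫ x, ‖f x‖ ∂μ)

theorem integral_laplacian_eq_zero (hf : ContDiff ℝ 2 f) (hfi : Integrable f μ)
    (hΔf : Integrable (Δ f) μ) : ∫ x, Δ f x ∂μ = 0 :=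
  tendsto_nhds_unique (tendsto_integral_cutoff_mul hΔf)
    (tendsto_integral_cutoff_mul_laplacian hf hfi)

theorem integrable_laplacian_of_le (hf : ContDiff ℝ 2 f) (hfi : Integrable f μ)
    (hg : Integrable g μ) (hgf : ∀ x, g x ≤ Δ f x) : Integrable (Δ f) μ := by
  have hΔf : LocallyIntegrable (Δ f) μ := (continuous_laplacian hf).locallyIntegrable
  have hlim : Tendsto (fun n ↦ ∫ x, cutoff n x * (Δ f x - g x) ∂μ) atTop
      (𝓝 (0 - ∫ x, g x ∂μ)) := by
    simp only [mul_sub, integral_sub (integrable_cutoff_mul _ hΔf)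
      (integrable_cutoff_mul _ hg.locallyIntegrable)]
    exact (tendsto_integral_cutoff_mul_laplacian hf hfi).sub (tendsto_integral_cutoff_mul hg)
  have hsub : Integrable (fun x ↦ Δ f x - g x) μ :=
    integrable_of_tendsto_integral_cutoff_mul (hΔf.sub hg.locallyIntegrable)
      (fun x ↦ sub_nonneg.mpr (hgf x)) hlim
  exact (hsub.add hg).congr (.of_forall fun x ↦ sub_add_cancel _ _)

theorem integral_mul_norm_fderiv_div_sq (hM : ContDiff ℝ 2 M) (hg : ContDiff ℝ 2 g)
    (hg₀ : ∀ x, 0 < g x) (hφ : Integrable (fun x ↦ M x ^ 2 / g x) μ)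
    (hMΔM : Integrable (fun x ↦ M x * Δ M x / g x) μ)
    (hΔg : Integrable (fun x ↦ (M x / g x) ^ 2 * Δ g x) μ) :
    Integrable (fun x ↦ g x * ‖fderiv ℝ (fun y ↦ M y / g y) x‖ ^ 2) μ ∧
      ∫ x, g x * ‖fderiv ℝ (fun y ↦ M y / g y) x‖ ^ 2 ∂μ =
        -∫ x, M x * Δ M x / g x ∂μ + (∫ x, (M x / g x) ^ 2 * Δ g x ∂μ) / 2 := by
  set φ : E → ℝ := fun x ↦ M x ^ 2 / g x
  have hφ₂ : ContDiff ℝ 2 φ := (hM.pow 2).div hg fun x ↦ (hg₀ x).ne'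
  have hΔφ : ∀ x, Δ φ x = 2 * (g x * ‖fderiv ℝ (fun y ↦ M y / g y) x‖ ^ 2) +
      2 * (M x * Δ M x / g x) - (M x / g x) ^ 2 * Δ g x := fun x ↦
    laplacian_sq_div hM.contDiffAt hg.contDiffAt (hg₀ x).ne'
  have hΔφi : Integrable (Δ φ) μ := by
    refine integrable_laplacian_of_le hφ₂ hφ ((hMΔM.const_mul 2).sub hΔg) fun x ↦ ?_
    have henergy_nonneg : 0 ≤ g x * ‖fderiv ℝ (fun y ↦ M y / g y) x‖ ^ 2 :=
      mul_nonneg (hg₀ x).le (sq_nonneg _)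
    simp only [Pi.sub_apply, hΔφ]
    linarith
  have henergy : (fun x ↦ g x * ‖fderiv ℝ (fun y ↦ M y / g y) x‖ ^ 2) =
      fun x ↦ Δ φ x / 2 - M x * Δ M x / g x + (M x / g x) ^ 2 * Δ g x / 2 := by
    ext x
    rw [hΔφ]
    ring
  rw [henergy]
  have hdiff : Integrable (fun x ↦ Δ φ x / 2 - M x * Δ M x / g x) μ :=
    (hΔφi.div_const 2).sub hMΔM
  refine ⟨hdiff.add (hΔg.div_const 2), ?_⟩
  rw [integral_add hdiff (hΔg.div_const 2), integral_sub (hΔφi.div_const 2) hMΔM, integral_div,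
    integral_div, integral_laplacian_eq_zero hφ₂ hφ hΔφi]
  ring

theorem assumption_A2_from_potential_bound_general {W : E → ℝ} {C : ℝ} (hM : ContDiff ℝ 2 M)
    (hM₂ : MemLp M 2 μ) (hMW : ∀ v, Δ M v = W v * M v) (hW : ∀ v, |W v| ≤ C * (1 + ‖v‖ ^ 2)) :
    Integrable (fun v ↦ (1 + ‖v‖ ^ 2) * ‖fderiv ℝ (fun w ↦ M w / (1 + ‖w‖ ^ 2)) v‖ ^ 2) μ ∧
      ∫ v, (1 + ‖v‖ ^ 2) * ‖fderiv ℝ (fun w ↦ M w / (1 + ‖w‖ ^ 2)) v‖ ^ 2 ∂μ =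
        -∫ v, W v * M v ^ 2 / (1 + ‖v‖ ^ 2) ∂μ +
          (finrank ℝ E : ℝ) * ∫ v, M v ^ 2 / (1 + ‖v‖ ^ 2) ^ 2 ∂μ := by
  have hweight : Continuous fun v : E ↦ 1 + ‖v‖ ^ 2 := by fun_prop
  have hweight₀ : ∀ v : E, 0 < 1 + ‖v‖ ^ 2 := fun v ↦ by positivity
  have hsq : Integrable (fun v ↦ M v ^ 2) μ := hM₂.integrable_sq
  have hpotential_eq : ∀ v, M v * Δ M v / (1 + ‖v‖ ^ 2) = W v * M v ^ 2 / (1 + ‖v‖ ^ 2) :=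
    fun v ↦ by rw [hMW, mul_left_comm, ← sq]
  have hpotential : Integrable (fun v ↦ M v * Δ M v / (1 + ‖v‖ ^ 2)) μ := by
    refine (hsq.const_mul C).mono' ((hM.continuous.mul (continuous_laplacian hM)).div hweight
      fun v ↦ (hweight₀ v).ne').aestronglyMeasurable (.of_forall fun v ↦ ?_)
    rw [hpotential_eq, norm_div, norm_of_nonneg (hweight₀ v).le, div_le_iff₀ (hweight₀ v)]
    calc ‖W v * M v ^ 2‖ = |W v| * M v ^ 2 := by
          rw [norm_mul, norm_eq_abs, norm_of_nonneg (sq_nonneg _)]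
      _ ≤ C * (1 + ‖v‖ ^ 2) * M v ^ 2 := mul_le_mul_of_nonneg_right (hW v) (sq_nonneg _)
      _ = C * M v ^ 2 * (1 + ‖v‖ ^ 2) := mul_right_comm _ _ _
  have hdiv : ∀ k, Integrable (fun v ↦ M v ^ 2 / (1 + ‖v‖ ^ 2) ^ k) μ := fun k ↦ by
    refine hsq.mono' ((hM.continuous.pow 2).div (hweight.pow k)
      fun v ↦ (pow_pos (hweight₀ v) k).ne').aestronglyMeasurable (.of_forall fun v ↦ ?_)
    rw [norm_of_nonneg (by positivity)]
    exact div_le_self (sq_nonneg _) (one_le_pow₀ (by simp))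
  obtain ⟨hint, hidentity⟩ := integral_mul_norm_fderiv_div_sq hM contDiff_one_add_norm_sq hweight₀
    (by simpa only [pow_one] using hdiv 1) hpotential
    (by simpa only [laplacian_one_add_norm_sq, div_pow] using (hdiv 2).mul_const _)
  refine ⟨hint, hidentity.trans ?_⟩
  simp only [laplacian_one_add_norm_sq, div_pow, integral_mul_const, hpotential_eq]
  ring

end InnerProductSpace

lemma lap_eq_laplacian {d : ℕ} {f : EuclideanSpace ℝ (Fin d) → ℝ} {v : EuclideanSpace ℝ (Fin d)}
    (hf : ContDiffAt ℝ 2 f v) : lap f v = Δ f v := by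
  simp only [lap, laplacian_eq_sum_fderiv (EuclideanSpace.basisFun (Fin d) ℝ) hf,
    EuclideanSpace.basisFun_apply]

end

/-- **The integration-by-parts identity of Section 5.1 (comment 4) of the paper**:
if `⟨v⟩^{-2} W` is bounded, with `W := ΔM/M`, then
`∫ ⟨v⟩² |∇(M⟨v⟩⁻²)|² dv = −∫ W M² ⟨v⟩⁻² dv + d ∫ M² ⟨v⟩⁻⁴ dv`, which is finite;
in particular Assumption (A2) holds. -/
theorem assumption_A2_from_potential_bound (d : ℕ) (hd : 1 ≤ d) (γ C₁ C₂ C₃ C₄ : ℝ)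
    (hγ : (d : ℝ) / 2 < γ) (hC₁ : 0 < C₁) (hC₁₂ : C₁ ≤ C₂)
    (M : EuclideanSpace ℝ (Fin d) → ℝ) (hMpos : ∀ v, 0 < M v) (hM : ContDiff ℝ 2 M)
    (hA1 : ∀ v, C₁ * Real.sqrt (1 + ‖v‖ ^ 2) ^ (-γ) ≤ M v ∧
              M v ≤ C₂ * Real.sqrt (1 + ‖v‖ ^ 2) ^ (-γ))
    (hgradM : ∀ v, ‖fderiv ℝ M v‖ ≤ C₃ * Real.sqrt (1 + ‖v‖ ^ 2) ^ (-γ))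
    (hW : ∀ v, |lap M v / M v| ≤ C₄ * (1 + ‖v‖ ^ 2)) :
    Integrable (fun v =>
        (1 + ‖v‖ ^ 2) * ‖fderiv ℝ (fun w => M w / (1 + ‖w‖ ^ 2)) v‖ ^ 2) ∧
    (∫ v, (1 + ‖v‖ ^ 2) * ‖fderiv ℝ (fun w => M w / (1 + ‖w‖ ^ 2)) v‖ ^ 2) =
      -(∫ v, (lap M v / M v) * (M v) ^ 2 / (1 + ‖v‖ ^ 2)) +
        (d : ℝ) * ∫ v, (M v) ^ 2 / (1 + ‖v‖ ^ 2) ^ 2 := by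
  have hM₂ : MemLp M 2 volume := by
    refine memLp_of_abs_le_one_add_norm_sq_rpow (C := C₂) (by rwa [finrank_euclideanSpace_fin])
      hM.continuous.aestronglyMeasurable fun v ↦ ?_
    rw [abs_of_pos (hMpos v)]
    exact (hA1 v).2
  have hMW : ∀ v, Laplacian.laplacian M v = lap M v / M v * M v := fun v ↦ by
    rw [div_mul_cancel₀ _ (hMpos v).ne', lap_eq_laplacian hM.contDiffAt]
  simpa only [finrank_euclideanSpace_fin] using
    assumption_A2_from_potential_bound_general hM hM₂ hMW hW
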